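/- Consider the scalar problem (SP): minimize f(x) subject to g(x) ≦ 0 (componentwise), where X ⊆ ℝ^s is an open convex set and f : X → ℝ, g : X → ℝ^m are Fréchet differentiable. Suppose that f is quasiconvex on X and, for every feasible point x, all components g_i with i in the active index set I(x) := {i | g_i(x) = 0} are strictly quasiconvex. Then the problem (SP) is FJ-pseudoconvex if and only if every Fritz John stationary point x of (SP) is a global solution of (SP). -/

import Mathlib

open Set

/-!
The sublevel set of a quasiconvex function `h` at the level `h x` is convex, so the derivative `L`
of `h` at `x` is nonpositive towards every point of it. If `h y < h x`, a whole neighbourhood of `y`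
lies in that set; were `L (y - x) = 0`, the linear map `L` would have a local maximum at `y` and
hence vanish. For strictly quasiconvex `h` the condition `h y ≤ h x` with `y ≠ x` suffices, because
the midpoint of `x` and `y` has a lower value. Vanishing of the gradient of the objective, or of an
active constraint, is itself a Fritz John condition, and this is excluded at points that are
improved upon by some feasible point.
-/

section StrictQuasiconvex

variable {𝕜 E β : Type*} [Ring 𝕜] [PartialOrder 𝕜] [AddCommGroup E] [Module 𝕜 E] [LinearOrder β]

variable (𝕜) in
/-- Strict quasiconvexity of `h` on `X`. As in `StrictConvexOn`, convexity of the domain is part of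
the notion. -/
def StrictQuasiconvexOn (X : Set E) (h : E → β) : Prop :=
  Convex 𝕜 X ∧ ∀ x ∈ X, ∀ y ∈ X, y ≠ x → ∀ t ∈ Ioo (0 : 𝕜) 1,
    h (x + t • (y - x)) < max (h x) (h y)

variable {X : Set E} {h : E → β}

theorem quasiconvexOn_of_add_smul_sub_le_max [AddLeftMono 𝕜] (hX : Convex 𝕜 X)
    (hle : ∀ x ∈ X, ∀ y ∈ X, ∀ t ∈ Icc (0 : 𝕜) 1, h (x + t • (y - x)) ≤ max (h x) (h y)) :
    QuasiconvexOn 𝕜 X h := by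
  refine fun r x hx y hy a t ha ht hat => ⟨hX hx.1 hy.1 ha ht hat, ?_⟩
  rw [Convex.combo_eq_smul_sub_add hat, add_comm]
  exact (hle x hx.1 y hy.1 t ⟨ht, hat ▸ le_add_of_nonneg_left ha⟩).trans (max_le hx.2 hy.2)

theorem StrictQuasiconvexOn.quasiconvexOn [AddLeftMono 𝕜] (hh : StrictQuasiconvexOn 𝕜 X h) :
    QuasiconvexOn 𝕜 X h := by
  refine quasiconvexOn_of_add_smul_sub_le_max hh.1 fun x hx y hy t ht => ?_
  rcases eq_or_ne y x with rfl | hyx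
  · simp
  rcases ht.1.eq_or_lt with rfl | ht0
  · simp
  rcases ht.2.eq_or_lt with rfl | ht1
  · simp
  · exact (hh.2 x hx y hy hyx t ⟨ht0, ht1⟩).le

end StrictQuasiconvex

section FirstOrder

variable {E : Type*} [NormedAddCommGroup E] [NormedSpace ℝ E] {X : Set E} {h : E → ℝ}
  {L : E →L[ℝ] ℝ} {x y : E}

theorem apply_sub_nonpos_of_quasiconvexOn (hh : QuasiconvexOn ℝ X h) (hL : HasFDerivAt h L x)
    (hx : x ∈ X) (hy : y ∈ X) (hle : h y ≤ h x) : L (y - x) ≤ 0 := by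
  have hmax : IsMaxOn h {z ∈ X | h z ≤ h x} x := fun _ hz => hz.2
  have hseg : segment ℝ x y ⊆ {z ∈ X | h z ≤ h x} :=
    (hh (h x)).segment_subset ⟨hx, le_rfl⟩ ⟨hy, hle⟩
  exact hmax.localize.hasFDerivWithinAt_nonpos hL.hasFDerivWithinAt
    (sub_mem_posTangentConeAt_of_segment_subset hseg)

theorem apply_sub_neg_of_quasiconvexOn (hX : IsOpen X) (hh : QuasiconvexOn ℝ X h)
    (hL : HasFDerivAt h L x) (hL0 : L ≠ 0) (hx : x ∈ X) (hy : y ∈ X) (hcont : ContinuousAt h y)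
    (hlt : h y < h x) : L (y - x) < 0 := by
  refine (apply_sub_nonpos_of_quasiconvexOn hh hL hx hy hlt.le).lt_of_ne fun hzero => hL0 ?_
  have hmax : IsLocalMax L y := by
    filter_upwards [hX.mem_nhds hy, hcont.eventually_lt_const hlt] with w hw hwlt
    have hnonpos := apply_sub_nonpos_of_quasiconvexOn hh hL hx hw hwlt.le
    rw [map_sub] at hzero hnonpos
    linarith
  exact hmax.hasFDerivAt_eq_zero L.hasFDerivAt

theorem StrictQuasiconvexOn.apply_sub_neg (hh : StrictQuasiconvexOn ℝ X h) (hX : IsOpen X)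
    (hcont : ContinuousOn h X) (hL : HasFDerivAt h L x) (hL0 : L ≠ 0) (hx : x ∈ X) (hy : y ∈ X)
    (hyx : y ≠ x) (hle : h y ≤ h x) : L (y - x) < 0 := by
  let z := x + (1 / 2 : ℝ) • (y - x)
  have hz : z ∈ X := hh.1.add_smul_sub_mem hx hy (by norm_num)
  have hzlt : h z < h x := by
    simpa only [max_eq_left hle] using hh.2 x hx y hy hyx (1 / 2) (by norm_num)
  have hneg : L (z - x) < 0 := apply_sub_neg_of_quasiconvexOn hX hh.quasiconvexOn hL hL0 hx hz
    (hcont.continuousAt (hX.mem_nhds hz)) hzlt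
  rw [add_sub_cancel_left, map_smul, smul_eq_mul] at hneg
  linarith

end FirstOrder

section FritzJohn

variable {E ι : Type*} [NormedAddCommGroup E] [NormedSpace ℝ E]

/-- FJ-pseudoconvexity of the problem of minimizing `f` over `{x ∈ X | g x ≤ 0}`, where `f'` and
`g'` are the derivatives of `f` and `g`. -/
def FJPseudoconvex (X : Set E) (f : E → ℝ) (f' : E → E →L[ℝ] ℝ) (g : E → ι → ℝ)
    (g' : E → E →L[ℝ] (ι → ℝ)) : Prop :=
  ∀ x ∈ X, ∀ y ∈ X, f y < f x → g x ≤ 0 → g y ≤ 0 →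
    f' x (y - x) < 0 ∧ ∀ i, g x i = 0 → g' x (y - x) i < 0

variable [Fintype ι]

/-- The Fritz John condition at a point at which the objective has derivative `L`, and the
constraints have value `c` and derivative `G`. -/
def FritzJohnCondition (L : E →L[ℝ] ℝ) (G : E →L[ℝ] (ι → ℝ)) (c : ι → ℝ) : Prop :=
  ∃ lam0 : ℝ, ∃ mu : ι → ℝ, 0 ≤ lam0 ∧ (∀ i, 0 ≤ mu i) ∧ ¬(lam0 = 0 ∧ mu = 0) ∧
    (∀ v, lam0 * L v + ∑ i, mu i * G v i = 0) ∧ ∀ i, mu i * c i = 0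

variable {L : E →L[ℝ] ℝ} {G : E →L[ℝ] (ι → ℝ)} {c : ι → ℝ}

theorem fritzJohnCondition_of_objective_eq_zero (hL : L = 0) : FritzJohnCondition L G c :=
  ⟨1, 0, zero_le_one, fun _ => le_rfl, by simp, by simp [hL], by simp⟩

theorem fritzJohnCondition_of_active_eq_zero {i : ι} (hi : c i = 0)
    (hG : (ContinuousLinearMap.proj i).comp G = (0 : E →L[ℝ] ℝ)) : FritzJohnCondition L G c := by
  classical
  have hGi : ∀ v, G v i = 0 := DFunLike.congr_fun hG
  have hmu : (0 : ι → ℝ) ≤ Pi.single i 1 := Pi.single_nonneg.mpr zero_le_one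
  refine ⟨0, Pi.single i 1, le_rfl, hmu, by simp, fun v => ?_, fun j => ?_⟩
  · simp [Pi.single_apply, hGi]
  · rcases eq_or_ne j i with rfl | hj
    · simp [hi]
    · simp [hj]

theorem not_fritzJohnCondition_of_apply_neg {v : E} (hL : L v < 0)
    (hG : ∀ i, c i = 0 → G v i < 0) : ¬FritzJohnCondition L G c := by
  rintro ⟨lam0, mu, hlam, hmu, hne, hstat, hcompl⟩
  have hobjective : lam0 * L v ≤ 0 := mul_nonpos_of_nonneg_of_nonpos hlam hL.le
  have hterm (i : ι) : mu i * G v i ≤ 0 := by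
    rcases mul_eq_zero.mp (hcompl i) with hi | hi
    · simp [hi]
    · exact mul_nonpos_of_nonneg_of_nonpos (hmu i) (hG i hi).le
  have hsum : ∑ i, mu i * G v i ≤ 0 := Finset.sum_nonpos fun i _ => hterm i
  have hobjective_zero : lam0 * L v = 0 := by linarith [hstat v]
  have hsum_zero : ∑ i, mu i * G v i = 0 := by linarith [hstat v]
  have hterm_zero (i : ι) : mu i * G v i = 0 :=
    (Finset.sum_eq_zero_iff_of_nonpos fun i _ => hterm i).mp hsum_zero i (Finset.mem_univ i)
  refine hne ⟨(mul_eq_zero.mp hobjective_zero).resolve_right hL.ne, funext fun i => ?_⟩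
  rcases mul_eq_zero.mp (hcompl i) with hi | hi
  · exact hi
  · exact (mul_eq_zero.mp (hterm_zero i)).resolve_right (hG i hi).ne

variable {X : Set E} {f : E → ℝ} {f' : E → E →L[ℝ] ℝ} {g : E → ι → ℝ} {g' : E → E →L[ℝ] (ι → ℝ)}

theorem FJPseudoconvex.le_of_fritzJohnCondition (h : FJPseudoconvex X f f' g g') {x y : E}
    (hx : x ∈ X) (hgx : g x ≤ 0) (hFJ : FritzJohnCondition (f' x) (g' x) (g x)) (hy : y ∈ X)
    (hgy : g y ≤ 0) : f x ≤ f y := by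
  by_contra! hlt
  obtain ⟨hf, hg⟩ := h x hx y hy hlt hgx hgy
  exact not_fritzJohnCondition_of_apply_neg hf hg hFJ

theorem fjPseudoconvex_of_forall_fritzJohnCondition (hX : IsOpen X)
    (hf' : ∀ x ∈ X, HasFDerivAt f (f' x) x) (hg' : ∀ x ∈ X, HasFDerivAt g (g' x) x)
    (hf : QuasiconvexOn ℝ X f)
    (hg : ∀ x ∈ X, g x ≤ 0 → ∀ i, g x i = 0 → StrictQuasiconvexOn ℝ X fun z => g z i)
    (hopt : ∀ x ∈ X, g x ≤ 0 → FritzJohnCondition (f' x) (g' x) (g x) →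
      ∀ y ∈ X, g y ≤ 0 → f x ≤ f y) :
    FJPseudoconvex X f f' g g' := by
  intro x hx y hy hlt hgx hgy
  have hnotFJ : ¬FritzJohnCondition (f' x) (g' x) (g x) := fun hFJ =>
    (hopt x hx hgx hFJ y hy hgy).not_gt hlt
  have hobjective : f' x (y - x) < 0 := apply_sub_neg_of_quasiconvexOn hX hf (hf' x hx)
    (mt fritzJohnCondition_of_objective_eq_zero hnotFJ) hx hy (hf' y hy).continuousAt hlt
  refine ⟨hobjective, fun i hi => ?_⟩
  have hgi' : ∀ z ∈ X, HasFDerivAt (fun z => g z i) ((ContinuousLinearMap.proj i).comp (g' z)) z :=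
    fun z hz => hasFDerivAt_pi'.mp (hg' z hz) i
  have hyx : y ≠ x := ne_of_apply_ne f hlt.ne
  exact (hg x hx hgx i hi).apply_sub_neg hX
    (fun z hz => (hgi' z hz).continuousAt.continuousWithinAt) (hgi' x hx)
    (mt (fritzJohnCondition_of_active_eq_zero hi) hnotFJ) hx hy hyx (hi ▸ hgy i)

theorem stmt_12_general (hX : IsOpen X) (hf' : ∀ x ∈ X, HasFDerivAt f (f' x) x)
    (hg' : ∀ x ∈ X, HasFDerivAt g (g' x) x) (hf : QuasiconvexOn ℝ X f)
    (hg : ∀ x ∈ X, g x ≤ 0 → ∀ i, g x i = 0 → StrictQuasiconvexOn ℝ X fun z => g z i) :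
    FJPseudoconvex X f f' g g' ↔
      ∀ x ∈ X, g x ≤ 0 → FritzJohnCondition (f' x) (g' x) (g x) →
        ∀ y ∈ X, g y ≤ 0 → f x ≤ f y :=
  ⟨fun h _ hx hgx hFJ _ hy hgy => h.le_of_fritzJohnCondition hx hgx hFJ hy hgy,
    fjPseudoconvex_of_forall_fritzJohnCondition hX hf' hg' hf hg⟩

end FritzJohn

/-- Consider the scalar problem (SP): minimize `f x` subject to `g x ≦ 0`
(componentwise), with `X ⊆ ℝ^s` an open convex set and `f : X → ℝ`, `g : X → ℝ^m`
Fréchet differentiable (derivatives `Jf`, `Jg`).  Suppose `f` is quasiconvex on `X`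
and, for every feasible point `x`, all active components `g_i` (`g_i x = 0`) are
strictly quasiconvex.  Then (SP) is FJ-pseudoconvex iff every Fritz John stationary
point of (SP) is a global solution of (SP). -/
theorem stmt_12 {s m : ℕ} (X : Set (Fin s → ℝ)) (hXopen : IsOpen X)
    (hXconvex : Convex ℝ X)
    (f : (Fin s → ℝ) → ℝ)
    (Jf : (Fin s → ℝ) → ((Fin s → ℝ) →L[ℝ] ℝ))
    (hfdiff : ∀ x ∈ X, HasFDerivAt f (Jf x) x)
    (g : (Fin s → ℝ) → (Fin m → ℝ))
    (Jg : (Fin s → ℝ) → ((Fin s → ℝ) →L[ℝ] (Fin m → ℝ)))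
    (hgdiff : ∀ x ∈ X, HasFDerivAt g (Jg x) x)
    -- `f` is quasiconvex on `X`:
    (hfquasi : ∀ x ∈ X, ∀ y ∈ X, ∀ t ∈ Icc (0 : ℝ) 1,
      f (x + t • (y - x)) ≤ max (f x) (f y))
    -- all components active at some feasible point are strictly quasiconvex:
    (hgssq : ∀ x ∈ X, (∀ i, g x i ≤ 0) → ∀ i, g x i = 0 →
      ∀ a ∈ X, ∀ b ∈ X, b ≠ a → ∀ t ∈ Ioo (0 : ℝ) 1,
        g (a + t • (b - a)) i < max (g a i) (g b i)) :
    -- (SP) is FJ-pseudoconvex ↔ every Fritz John stationary point is a global solution: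
    (∀ x ∈ X, ∀ y ∈ X,
      f y < f x → (∀ i, g x i ≤ 0) → (∀ i, g y i ≤ 0) →
        Jf x (y - x) < 0 ∧ ∀ i, g x i = 0 → Jg x (y - x) i < 0) ↔
    (∀ x ∈ X, (∀ i, g x i ≤ 0) →
      (∃ lam0 : ℝ, ∃ mu : Fin m → ℝ, 0 ≤ lam0 ∧ (∀ i, 0 ≤ mu i) ∧
        ¬(lam0 = 0 ∧ mu = 0) ∧
        (∀ v : Fin s → ℝ, lam0 * Jf x v + ∑ i, mu i * Jg x v i = 0) ∧
        (∀ i, mu i * g x i = 0)) →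
      ∀ y ∈ X, (∀ i, g y i ≤ 0) → f x ≤ f y) :=
  stmt_12_general hXopen hfdiff hgdiff (quasiconvexOn_of_add_smul_sub_le_max hXconvex hfquasi)
    fun x hx hgx i hi => ⟨hXconvex, hgssq x hx hgx i hi⟩
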